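/- Let μ ∈ ℝ, σ' > 0, ε > 0, and let X be a real random variable with law gaussianReal μ σ'², with cumulative distribution function F and density φ. Define the punish-reward estimator r̂(x, t) = (t + x)/2 if |x − t| ≤ ε, and r̂(x, t) = t − |t − x| if |x − t| > ε. Then the derivative at the truthful report x = μ of the map x ↦ E[r̂(x, X)] equals F(μ + ε) − 1/2 − ε·φ(μ + ε), and this quantity is strictly positive. Equivalently, writing ε = a·σ' with a > 0 and letting Φ and φ₀ denote the standard Gaussian cdf and density, Φ(a) − a·φ₀(a) > 1/2. Hence an image-seeking user strictly gains by inflating its self-report above μ. -/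

import Mathlib

open MeasureTheory ProbabilityTheory
open scoped NNReal ENNReal

/-!
As a function of `t`, the reputation `r̂(x, t)` is piecewise linear with jumps at `x ± ε`, hence for
`t ≠ x - ε` a combination of the indicators of `t ≤ x ± ε` and the hinges `(x ± ε - t)⁺`. The
integral of an indicator is a value of the distribution function `F`, and `y ↦ E (y - X)⁺` is an
antiderivative of `F`, so `E r̂(x, X)` can be differentiated term by term for every atomless
integrable law. If the law is symmetric about `m`, the derivative at `m` is
`F (m + ε) - 1 / 2 - ε * F' (m + ε)`. Since `F m = 1 / 2`, this is positive as soon as `F` is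
strictly concave to the right of `m`: the chord over `[m, m + ε]` is steeper than the tangent at
`m + ε`.
-/

open Set Filter Topology

/-- The punish-reward reputation `r̂(x, t)` with tolerance `ε`, for the self-report `x` and the
aggregate cross-report `t`. -/
noncomputable def punishReward (ε x t : ℝ) : ℝ :=
  if |x - t| ≤ ε then (t + x) / 2 else t - |t - x|

/-- The first lower partial moment `E (y - X)⁺` of a law `ν` on the line, as a function of the
threshold `y`. It is used as an antiderivative of the distribution function of `ν`. -/
noncomputable def lowerPartialMoment (ν : Measure ℝ) (y : ℝ) : ℝ :=
  ∫ t, max (y - t) 0 ∂ν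

lemma measurable_punishReward (ε x : ℝ) : Measurable (punishReward ε x) :=
  Measurable.ite (measurableSet_le (by fun_prop) measurable_const) (by fun_prop) (by fun_prop)

lemma integrable_max_const_sub_zero {ν : Measure ℝ} [IsFiniteMeasure ν] (hν : Integrable id ν)
    (y : ℝ) : Integrable (fun t ↦ max (y - t) 0) ν :=
  ((integrable_const y).sub hν).sup (integrable_zero ℝ ℝ ν)

lemma integrable_indicator_Iic_add_max {ν : Measure ℝ} [IsFiniteMeasure ν]
    (hν : Integrable id ν) (a b y : ℝ) :
    Integrable (fun t ↦ a * (Iic y).indicator 1 t + b * max (y - t) 0) ν :=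
  (((integrable_const 1).indicator measurableSet_Iic).const_mul a).add
    ((integrable_max_const_sub_zero hν y).const_mul b)

lemma hasDerivAt_max_sub_const_zero {t y : ℝ} (hty : t ≠ y) :
    HasDerivAt (fun x ↦ max (x - t) 0) ((Iic y).indicator 1 t) y := by
  rcases hty.lt_or_gt with h | h
  · have heq : (fun x ↦ max (x - t) 0) =ᶠ[𝓝 y] fun x ↦ x - t := by
      filter_upwards [lt_mem_nhds h] with x hx
      exact max_eq_left (sub_nonneg.2 hx.le)
    simpa [h.le] using ((hasDerivAt_id y).sub_const t).congr_of_eventuallyEq heq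
  · have heq : (fun x ↦ max (x - t) 0) =ᶠ[𝓝 y] fun _ ↦ 0 := by
      filter_upwards [gt_mem_nhds h] with x hx
      exact max_eq_right (sub_nonpos.2 hx.le)
    simpa [h] using (hasDerivAt_const y (0 : ℝ)).congr_of_eventuallyEq heq

lemma hasDerivAt_lowerPartialMoment {ν : Measure ℝ} [IsProbabilityMeasure ν]
    (hν : Integrable id ν) {y : ℝ} (hy : ν {y} = 0) :
    HasDerivAt (lowerPartialMoment ν) (cdf ν y) y := by
  have hlip (t : ℝ) : LipschitzOnWith (Real.nnabs 1) (fun x ↦ max (x - t) 0) univ := by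
    refine LipschitzWith.lipschitzOnWith ?_
    simpa using (LipschitzWith.id.sub (LipschitzWith.const t)).max_const (0 : ℝ)
  have hderiv : ∀ᵐ t ∂ν, HasDerivAt (fun x ↦ max (x - t) 0) ((Iic y).indicator 1 t) y :=
    (measure_eq_zero_iff_ae_notMem.1 hy).mono fun t ht ↦ hasDerivAt_max_sub_const_zero ht
  have hint := (hasDerivAt_integral_of_dominated_loc_of_lip (bound := fun _ ↦ 1) univ_mem
    (.of_forall fun x ↦ (integrable_max_const_sub_zero hν x).aestronglyMeasurable)
    (integrable_max_const_sub_zero hν y)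
    (aestronglyMeasurable_one.indicator measurableSet_Iic)
    (.of_forall hlip) (integrable_const 1) hderiv).2
  rwa [integral_indicator_one measurableSet_Iic, ← cdf_eq_real] at hint

-- As `t` increases, the slope goes from `2` to `1 / 2` with a jump of `3 * ε / 2` at `x - ε`, then
-- to `0` with a jump of `-(ε / 2)` at `x + ε`.
lemma punishReward_eq_indicator_add_max {ε x t : ℝ} (hε : 0 ≤ ε) (ht : t ≠ x - ε) :
    punishReward ε x t =
      x + (ε / 2 * (Iic (x + ε)).indicator 1 t + -(1 / 2) * max (x + ε - t) 0)
        + (-(3 * ε / 2) * (Iic (x - ε)).indicator 1 t + -(3 / 2) * max (x - ε - t) 0) := by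
  simp only [punishReward, abs_sub_comm t x, indicator_apply, mem_Iic, Pi.one_apply]
  rcases ht.lt_or_gt with hlt | hgt
  · have hout : ¬ |x - t| ≤ ε := fun h ↦ by linarith [(abs_le.1 h).2]
    rw [if_neg hout, abs_of_pos (by linarith), if_pos (by linarith), if_pos hlt.le,
      max_eq_left (by linarith), max_eq_left (by linarith)]
    ring
  rw [if_neg hgt.not_ge, max_eq_right (sub_nonpos.2 hgt.le)]
  rcases le_or_gt t (x + ε) with hle | hlt
  · have hin : |x - t| ≤ ε := abs_le.2 ⟨by linarith, by linarith⟩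
    rw [if_pos hin, if_pos hle, max_eq_left (sub_nonneg.2 hle)]
    ring
  · have hout : ¬ |x - t| ≤ ε := fun h ↦ by linarith [(abs_le.1 h).1]
    rw [if_neg hout, abs_of_neg (by linarith), if_neg hlt.not_ge, max_eq_right (by linarith)]
    ring

section IntegrableLaw

variable {ν : Measure ℝ} [IsProbabilityMeasure ν]

lemma integral_indicator_Iic_add_max (hν : Integrable id ν) (a b y : ℝ) :
    ∫ t, (a * (Iic y).indicator 1 t + b * max (y - t) 0) ∂ν =
      a * cdf ν y + b * lowerPartialMoment ν y := by
  have hind : Integrable ((Iic y).indicator 1 : ℝ → ℝ) ν :=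
    (integrable_const 1).indicator measurableSet_Iic
  rw [integral_add (hind.const_mul a) ((integrable_max_const_sub_zero hν y).const_mul b),
    integral_const_mul, integral_const_mul, integral_indicator_one measurableSet_Iic, cdf_eq_real,
    lowerPartialMoment]

variable [NullSingletonClass ν]

lemma integral_punishReward (hν : Integrable id ν) {ε : ℝ} (hε : 0 ≤ ε) (x : ℝ) :
    ∫ t, punishReward ε x t ∂ν =
      x + (ε / 2 * cdf ν (x + ε) + -(1 / 2) * lowerPartialMoment ν (x + ε))
        + (-(3 * ε / 2) * cdf ν (x - ε) + -(3 / 2) * lowerPartialMoment ν (x - ε)) := by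
  have hright := integrable_indicator_Iic_add_max hν (ε / 2) (-(1 / 2)) (x + ε)
  have hleft := integrable_indicator_Iic_add_max hν (-(3 * ε / 2)) (-(3 / 2)) (x - ε)
  have hne : ∀ᵐ t ∂ν, t ≠ x - ε := Measure.ae_ne ν (x - ε)
  rw [integral_congr_ae (hne.mono fun t ↦ punishReward_eq_indicator_add_max hε),
    integral_add ((integrable_const x).fun_add hright) hleft,
    integral_add (integrable_const x) hright, integral_indicator_Iic_add_max hν,
    integral_indicator_Iic_add_max hν]
  simp

lemma hasDerivAt_integral_punishReward (hν : Integrable id ν) {ε x f₁ f₂ : ℝ} (hε : 0 ≤ ε)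
    (h₁ : HasDerivAt (cdf ν) f₁ (x - ε)) (h₂ : HasDerivAt (cdf ν) f₂ (x + ε)) :
    HasDerivAt (fun y ↦ ∫ t, punishReward ε y t ∂ν)
      (1 + (ε / 2 * f₂ - 1 / 2 * cdf ν (x + ε)) - (3 * ε / 2 * f₁ + 3 / 2 * cdf ν (x - ε))) x := by
  have hG (y : ℝ) : HasDerivAt (lowerPartialMoment ν) (cdf ν y) y :=
    hasDerivAt_lowerPartialMoment hν (measure_singleton y)
  have hright := (h₂.comp_add_const x ε).const_mul (ε / 2) |>.add <|
    ((hG (x + ε)).comp_add_const x ε).const_mul (-(1 / 2))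
  have hleft := (h₁.comp_sub_const x ε).const_mul (-(3 * ε / 2)) |>.add <|
    ((hG (x - ε)).comp_sub_const x ε).const_mul (-(3 / 2))
  rw [funext (integral_punishReward hν hε)]
  exact (((hasDerivAt_id x).add hright).add hleft).congr_deriv (by ring)

end IntegrableLaw

section SymmetricLaw

variable {ν : Measure ℝ} [IsProbabilityMeasure ν] [NullSingletonClass ν] {m : ℝ}

lemma cdf_reflection (hsymm : MeasurePreserving (fun t ↦ 2 * m - t) ν ν) (t : ℝ) :
    cdf ν (2 * m - t) = 1 - cdf ν t := by
  have hpre : (fun t ↦ 2 * m - t) ⁻¹' Iic (2 * m - t) = Ici t := by ext s; simp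
  rw [cdf_eq_real, cdf_eq_real,
    ← hsymm.measureReal_preimage measurableSet_Iic.nullMeasurableSet, hpre,
    ← probReal_compl_eq_one_sub measurableSet_Iic, compl_Iic, measureReal_congr Ioi_ae_eq_Ici]

lemma cdf_center_eq_half (hsymm : MeasurePreserving (fun t ↦ 2 * m - t) ν ν) : cdf ν m = 1 / 2 := by
  have h := cdf_reflection hsymm m
  rw [two_mul, add_sub_cancel_right] at h
  linarith

lemma hasDerivAt_cdf_reflection (hsymm : MeasurePreserving (fun t ↦ 2 * m - t) ν ν) {f t : ℝ}
    (hf : HasDerivAt (cdf ν) f t) : HasDerivAt (cdf ν) f (2 * m - t) := by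
  have hF : ⇑(cdf ν) = fun s ↦ 1 - cdf ν (2 * m - s) := by
    ext s
    rw [cdf_reflection hsymm, sub_sub_cancel]
  rw [← sub_sub_cancel (2 * m) t] at hf
  rw [hF]
  simpa using (hf.comp_const_sub (2 * m) (2 * m - t)).const_sub 1

lemma hasDerivAt_integral_punishReward_center
    (hsymm : MeasurePreserving (fun t ↦ 2 * m - t) ν ν) (hν : Integrable id ν) {ε f : ℝ}
    (hε : 0 ≤ ε) (hf : HasDerivAt (cdf ν) f (m + ε)) :
    HasDerivAt (fun x ↦ ∫ t, punishReward ε x t ∂ν) (cdf ν (m + ε) - 1 / 2 - ε * f) m := by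
  have hrefl : m - ε = 2 * m - (m + ε) := by ring
  have hf' : HasDerivAt (cdf ν) f (m - ε) := hrefl ▸ hasDerivAt_cdf_reflection hsymm hf
  refine (hasDerivAt_integral_punishReward hν hε hf' hf).congr_deriv ?_
  rw [hrefl, cdf_reflection hsymm]
  ring

lemma cdf_sub_half_sub_mul_deriv_pos (hsymm : MeasurePreserving (fun t ↦ 2 * m - t) ν ν)
    (hconc : StrictConcaveOn ℝ (Ici m) (cdf ν)) {a f : ℝ} (ha : 0 < a)
    (hf : HasDerivAt (cdf ν) f (m + a)) : 0 < cdf ν (m + a) - 1 / 2 - a * f := by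
  have hlt : m < m + a := lt_add_of_pos_right m ha
  have hslope : f < slope (cdf ν) m (m + a) :=
    hconc.lt_slope_of_hasDerivAt self_mem_Ici hlt.le hlt hf
  rw [slope_def_field, cdf_center_eq_half hsymm, add_sub_cancel_left, lt_div_iff₀ ha] at hslope
  linarith

end SymmetricLaw

lemma hasDerivAt_integral_Iic {E : Type*} [NormedAddCommGroup E] [NormedSpace ℝ E]
    [CompleteSpace E] {f : ℝ → E} {x : ℝ} (hf : Integrable f) (hc : ContinuousAt f x) :
    HasDerivAt (fun y ↦ ∫ t in Iic y, f t) (f x) x := by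
  have heq : (fun y ↦ ∫ t in Iic y, f t) = fun y ↦ (∫ t in Iic x, f t) + ∫ t in x..y, f t := by
    ext y
    rw [← intervalIntegral.integral_Iic_sub_Iic hf.integrableOn hf.integrableOn, add_sub_cancel]
  rw [heq]
  exact (intervalIntegral.integral_hasDerivAt_right hf.intervalIntegrable
    hf.aestronglyMeasurable.stronglyMeasurableAtFilter hc).const_add _

section Gaussian

variable (m : ℝ) {v : ℝ≥0}

lemma continuous_gaussianPDFReal : Continuous (gaussianPDFReal m v) := by
  unfold gaussianPDFReal
  fun_prop

lemma strictAntiOn_gaussianPDFReal (hv : v ≠ 0) : StrictAntiOn (gaussianPDFReal m v) (Ici m) := by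
  intro x hx y _ hxy
  have hsq : (x - m) ^ 2 < (y - m) ^ 2 :=
    pow_lt_pow_left₀ (sub_lt_sub_right hxy m) (sub_nonneg.2 hx) two_ne_zero
  unfold gaussianPDFReal
  gcongr

lemma hasDerivAt_cdf_gaussianReal (hv : v ≠ 0) (x : ℝ) :
    HasDerivAt (cdf (gaussianReal m v)) (gaussianPDFReal m v x) x := by
  have heq : ⇑(cdf (gaussianReal m v)) = fun y ↦ ∫ t in Iic y, gaussianPDFReal m v t := by
    ext y
    rw [cdf_eq_real, measureReal_def, gaussianReal_apply_eq_integral m hv, ENNReal.toReal_ofReal]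
    exact integral_nonneg (gaussianPDFReal_nonneg m v)
  rw [heq]
  exact hasDerivAt_integral_Iic (integrable_gaussianPDFReal m v)
    (continuous_gaussianPDFReal m).continuousAt

lemma strictConcaveOn_cdf_gaussianReal (hv : v ≠ 0) :
    StrictConcaveOn ℝ (Ici m) (cdf (gaussianReal m v)) := by
  have hderiv := hasDerivAt_cdf_gaussianReal m hv
  refine StrictAntiOn.strictConcaveOn_of_deriv (convex_Ici m)
    (fun x _ ↦ (hderiv x).continuousAt.continuousWithinAt) ?_
  rw [funext fun x ↦ (hderiv x).deriv]
  exact (strictAntiOn_gaussianPDFReal m hv).mono interior_subset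

lemma measurePreserving_reflection_gaussianReal (v : ℝ≥0) :
    MeasurePreserving (fun t ↦ 2 * m - t) (gaussianReal m v) (gaussianReal m v) where
  measurable := by fun_prop
  map_eq := by rw [gaussianReal_map_const_sub, two_mul, add_sub_cancel_right]

lemma half_lt_cdf_gaussianReal_sub_mul (hv : v ≠ 0) {a : ℝ} (ha : 0 < a) :
    1 / 2 < cdf (gaussianReal m v) (m + a) - a * gaussianPDFReal m v (m + a) := by
  have := nullSingletonClass_gaussianReal (μ := m) hv
  have hpos := cdf_sub_half_sub_mul_deriv_pos (measurePreserving_reflection_gaussianReal m v)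
    (strictConcaveOn_cdf_gaussianReal m hv) ha (hasDerivAt_cdf_gaussianReal m hv (m + a))
  linarith

lemma integrable_id_gaussianReal (v : ℝ≥0) : Integrable id (gaussianReal m v) :=
  (memLp_id_gaussianReal 1).integrable le_rfl

end Gaussian

theorem stmt12_general {Ω : Type*} [MeasurableSpace Ω] {P : Measure Ω} {ν : Measure ℝ}
    [IsProbabilityMeasure ν] [NullSingletonClass ν] {m ε f : ℝ} (hε : 0 < ε) {X : Ω → ℝ}
    (hX : HasLaw X ν P) (hν : Integrable id ν)
    (hsymm : MeasurePreserving (fun t ↦ 2 * m - t) ν ν)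
    (hconc : StrictConcaveOn ℝ (Ici m) (cdf ν)) (hf : HasDerivAt (cdf ν) f (m + ε)) :
    HasDerivAt (fun y ↦ ∫ ω, punishReward ε y (X ω) ∂P) (cdf ν (m + ε) - 1 / 2 - ε * f) m ∧
      0 < cdf ν (m + ε) - 1 / 2 - ε * f := by
  refine ⟨?_, cdf_sub_half_sub_mul_deriv_pos hsymm hconc hε hf⟩
  have hlaw (y : ℝ) : ∫ ω, punishReward ε y (X ω) ∂P = ∫ t, punishReward ε y t ∂ν :=
    hX.integral_comp (measurable_punishReward ε y).aestronglyMeasurable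
  rw [funext hlaw]
  exact hasDerivAt_integral_punishReward_center hsymm hν hε.le hf

/-- The derivative at the truthful report `x = μ` of the expected reputation
`x ↦ E[r̂(x, X)]` in the punish-reward mechanism equals `F(μ+ε) − 1/2 − ε·φ(μ+ε)` and is
strictly positive; equivalently, with `ε = a·σ'` and `Φ`, `φ₀` the standard Gaussian cdf
and density, `Φ(a) − a·φ₀(a) > 1/2` for all `a > 0`. Hence an image-seeking user strictly
gains by inflating its self-report above `μ`. -/
theorem stmt12 {Ω : Type*} [MeasurableSpace Ω] (P : Measure Ω) [IsProbabilityMeasure P]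
    (μ : ℝ) (σ' : ℝ≥0) (hσ' : 0 < σ') (ε : ℝ) (hε : 0 < ε)
    (X : Ω → ℝ) (hXm : Measurable X) (hX : P.map X = gaussianReal μ (σ' ^ 2))
    (F : ℝ → ℝ) (hF : ∀ t, F t = cdf (gaussianReal μ (σ' ^ 2)) t)
    (φ : ℝ → ℝ) (hφ : ∀ t, φ t = gaussianPDFReal μ (σ' ^ 2) t)
    (rhat : ℝ → ℝ → ℝ)
    (hrhat : ∀ x t, rhat x t = if |x - t| ≤ ε then (t + x) / 2 else t - |t - x|) :
    HasDerivAt (fun y => ∫ ω, rhat y (X ω) ∂P)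
        (F (μ + ε) - 1 / 2 - ε * φ (μ + ε)) μ ∧
      0 < F (μ + ε) - 1 / 2 - ε * φ (μ + ε) ∧
      ∀ a : ℝ, 0 < a →
        1 / 2 < cdf (gaussianReal 0 1) a - a * gaussianPDFReal 0 1 a := by
  obtain rfl : F = cdf (gaussianReal μ (σ' ^ 2)) := funext hF
  obtain rfl : φ = gaussianPDFReal μ (σ' ^ 2) := funext hφ
  obtain rfl : rhat = punishReward ε := funext₂ hrhat
  have hv : σ' ^ 2 ≠ 0 := (pow_pos hσ' 2).ne'
  have := nullSingletonClass_gaussianReal (μ := μ) hv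
  obtain ⟨hderiv, hpos⟩ := stmt12_general hε ⟨hXm.aemeasurable, hX⟩ (integrable_id_gaussianReal μ _)
    (measurePreserving_reflection_gaussianReal μ _) (strictConcaveOn_cdf_gaussianReal μ hv)
    (hasDerivAt_cdf_gaussianReal μ hv (μ + ε))
  exact ⟨hderiv, hpos, fun a ha ↦ by
    simpa only [zero_add] using half_lt_cdf_gaussianReal_sub_mul 0 one_ne_zero ha⟩
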